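/- arXiv:math/0007184 — 2 statements merged into one kernel-verified Lean document; each statement's English description precedes it below -/
import Mathlib

section
/- Suppose p₁, p₂, p₃ are integers with 0 < p₁ < p₂ < p₃ and u = (u₁,…,u₇) ∈ N_ν(p). If at least three of the seven coordinates u₁,…,u₇ are zero, then u₁ ≠ 0 and none of the three pairs (u₂,u₃), (u₄,u₅), (u₆,u₇) equals (0,0). -/
open Quaternion

noncomputable section

/-- The imaginary quaternion unit `i`. -/
def qi : ℍ[ℝ] := ⟨0, 1, 0, 0⟩
/-- The imaginary quaternion unit `j`. -/
def qj : ℍ[ℝ] := ⟨0, 0, 1, 0⟩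
/-- The imaginary quaternion unit `k`. -/
def qk : ℍ[ℝ] := ⟨0, 0, 0, 1⟩

/-- `u ∈ N_ν(p)`: `u` lies on the unit sphere of `ℍ⁷`, the `Sp(1)` moment map vanishes,
and the `U(1)_p` moment map vanishes.  Coordinates are `0`-indexed, so `u 0` is `u₁` and the
quaternionic pairs are `(u 1, u 2), (u 3, u 4), (u 5, u 6)`. -/
def inN (p₁ p₂ p₃ : ℤ) (u : Fin 7 → ℍ[ℝ]) : Prop :=
  (∑ α, ‖u α‖ ^ 2) = 1 ∧
  (∑ α, star (u α) * qi * u α) = 0 ∧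
  (∑ α, star (u α) * qj * u α) = 0 ∧
  (∑ α, star (u α) * qk * u α) = 0 ∧
  (p₁ : ℍ[ℝ]) * (star (u 1) * u 2 - star (u 2) * u 1) +
    (p₂ : ℍ[ℝ]) * (star (u 3) * u 4 - star (u 4) * u 3) +
    (p₃ : ℍ[ℝ]) * (star (u 5) * u 6 - star (u 6) * u 5) = 0

/-- The action of `(λ, z) ∈ Sp(1) × U(1)_p` on `ℍ⁷`: `z` fixes `u 0` and rotates each
quaternionic pair `(u (2α-1), u (2α))` by the phase `z ^ pα`, and then `λ` multiplies every
coordinate on the left. -/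
def act (p₁ p₂ p₃ : ℤ) (lam : ℍ[ℝ]) (z : ℂ) (u : Fin 7 → ℍ[ℝ]) : Fin 7 → ℍ[ℝ] :=
  fun α => lam *
    (![u 0,
       (z ^ p₁).re • u 1 + (z ^ p₁).im • u 2,
       (-(z ^ p₁).im) • u 1 + (z ^ p₁).re • u 2,
       (z ^ p₂).re • u 3 + (z ^ p₂).im • u 4,
       (-(z ^ p₂).im) • u 3 + (z ^ p₂).re • u 4,
       (z ^ p₃).re • u 5 + (z ^ p₃).im • u 6,
       (-(z ^ p₃).im) • u 5 + (z ^ p₃).re • u 6] α)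

lemma qi_re : qi.re = 0 := rfl
lemma qi_imI : qi.imI = 1 := rfl
lemma qi_imJ : qi.imJ = 0 := rfl
lemma qi_imK : qi.imK = 0 := rfl
lemma qj_re : qj.re = 0 := rfl
lemma qj_imI : qj.imI = 0 := rfl
lemma qj_imJ : qj.imJ = 1 := rfl
lemma qj_imK : qj.imK = 0 := rfl
lemma qk_re : qk.re = 0 := rfl
lemma qk_imI : qk.imI = 0 := rfl
lemma qk_imJ : qk.imJ = 0 := rfl
lemma qk_imK : qk.imK = 1 := rfl

lemma nrm_sq (x : ℍ[ℝ]) : ‖x‖ ^ 2 = x.re ^ 2 + x.imI ^ 2 + x.imJ ^ 2 + x.imK ^ 2 := by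
  rw [← Quaternion.normSq_def', Quaternion.normSq_eq_norm_mul_self, sq]

/-- The norm of the moment map term of an orthogonal pair. -/
lemma nrm_term (x y : ℍ[ℝ])
    (h : x.re * y.re + x.imI * y.imI + x.imJ * y.imJ + x.imK * y.imK = 0) :
    ‖star x * y - star y * x‖ = 2 * (‖x‖ * ‖y‖) := by
  have e : star x * y - star y * x = (2 : ℝ) • (star x * y) := by
    ext <;> simp <;> linarith
  rw [e, norm_smul, norm_mul, norm_star]
  norm_num

set_option maxHeartbeats 2000000 in
lemma frame (u : Fin 7 → ℍ[ℝ]) (h1 : (∑ α, ‖u α‖ ^ 2) = 1)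
    (hi : (∑ α, star (u α) * qi * u α) = 0)
    (hj : (∑ α, star (u α) * qj * u α) = 0)
    (hk : (∑ α, star (u α) * qk * u α) = 0) (α : Fin 7) :
    ∑ β, (4 * ((u α).re * (u β).re + (u α).imI * (u β).imI + (u α).imJ * (u β).imJ
      + (u α).imK * (u β).imK)) ^ 2 = 4 * ‖u α‖ ^ 2 := by
  simp only [nrm_sq] at *
  have i1 := congrArg (fun q : ℍ[ℝ] => q.imI) hi
  have i2 := congrArg (fun q : ℍ[ℝ] => q.imJ) hi
  have i3 := congrArg (fun q : ℍ[ℝ] => q.imK) hi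
  have j1 := congrArg (fun q : ℍ[ℝ] => q.imI) hj
  have j2 := congrArg (fun q : ℍ[ℝ] => q.imJ) hj
  have j3 := congrArg (fun q : ℍ[ℝ] => q.imK) hj
  have k1 := congrArg (fun q : ℍ[ℝ] => q.imI) hk
  have k2 := congrArg (fun q : ℍ[ℝ] => q.imJ) hk
  have k3 := congrArg (fun q : ℍ[ℝ] => q.imK) hk
  simp [Fin.sum_univ_seven, qi_re, qi_imI, qi_imJ, qi_imK, qj_re, qj_imI, qj_imJ, qj_imK,
    qk_re, qk_imI, qk_imJ, qk_imK] at i1 i2 i3 j1 j2 j3 k1 k2 k3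
  have expand : ∀ a b c d : ℝ, ∑ β, (4 * (a * (u β).re + b * (u β).imI + c * (u β).imJ
      + d * (u β).imK)) ^ 2 = 16 * (a^2 * ∑ β, (u β).re^2 + b^2 * ∑ β, (u β).imI^2
      + c^2 * ∑ β, (u β).imJ^2 + d^2 * ∑ β, (u β).imK^2
      + 2*a*b * ∑ β, (u β).re * (u β).imI + 2*a*c * ∑ β, (u β).re * (u β).imJ
      + 2*a*d * ∑ β, (u β).re * (u β).imK + 2*b*c * ∑ β, (u β).imI * (u β).imJ
      + 2*b*d * ∑ β, (u β).imI * (u β).imK + 2*c*d * ∑ β, (u β).imJ * (u β).imK) := by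
    intro a b c d
    simp only [Finset.mul_sum, ← Finset.sum_add_distrib]
    exact Finset.sum_congr rfl fun β _ => by ring
  have e1 : ∑ β, (u β).re^2 = 1/4 := by
    simp only [Fin.sum_univ_seven] at *; linarith
  have e2 : ∑ β, (u β).imI^2 = 1/4 := by
    simp only [Fin.sum_univ_seven] at *; linarith
  have e3 : ∑ β, (u β).imJ^2 = 1/4 := by
    simp only [Fin.sum_univ_seven] at *; linarith
  have e4 : ∑ β, (u β).imK^2 = 1/4 := by
    simp only [Fin.sum_univ_seven] at *; linarith
  have f1 : ∑ β, (u β).re * (u β).imI = 0 := by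
    simp only [Fin.sum_univ_seven] at *; linarith
  have f2 : ∑ β, (u β).re * (u β).imJ = 0 := by
    simp only [Fin.sum_univ_seven] at *; linarith
  have f3 : ∑ β, (u β).re * (u β).imK = 0 := by
    simp only [Fin.sum_univ_seven] at *; linarith
  have f4 : ∑ β, (u β).imI * (u β).imJ = 0 := by
    simp only [Fin.sum_univ_seven] at *; linarith
  have f5 : ∑ β, (u β).imI * (u β).imK = 0 := by
    simp only [Fin.sum_univ_seven] at *; linarith
  have f6 : ∑ β, (u β).imJ * (u β).imK = 0 := by
    simp only [Fin.sum_univ_seven] at *; linarith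
  rw [expand, e1, e2, e3, e4, f1, f2, f3, f4, f5, f6]
  ring

/-- Each coordinate has norm `0` or `1/2`, and the coordinates are mutually orthogonal. -/
lemma structure_lemma (u : Fin 7 → ℍ[ℝ]) (h1 : (∑ α, ‖u α‖ ^ 2) = 1)
    (hi : (∑ α, star (u α) * qi * u α) = 0)
    (hj : (∑ α, star (u α) * qj * u α) = 0)
    (hk : (∑ α, star (u α) * qk * u α) = 0)
    (hv : 3 ≤ {α : Fin 7 | u α = 0}.ncard) :
    (∀ α, ‖u α‖ = 0 ∨ ‖u α‖ = 1 / 2) ∧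
    ∀ α β, α ≠ β → (u α).re * (u β).re + (u α).imI * (u β).imI + (u α).imJ * (u β).imJ
      + (u α).imK * (u β).imK = 0 := by
  classical
  have hf := frame u h1 hi hj hk
  have hself : ∀ α, (u α).re * (u α).re + (u α).imI * (u α).imI + (u α).imJ * (u α).imJ
      + (u α).imK * (u α).imK = ‖u α‖ ^ 2 := fun α => by rw [nrm_sq]; ring
  have hle : ∀ α, 4 * ‖u α‖ ^ 2 ≤ 1 := by
    intro α
    have := Finset.single_le_sum (f := fun β => (4 * ((u α).re * (u β).re
      + (u α).imI * (u β).imI + (u α).imJ * (u β).imJ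
      + (u α).imK * (u β).imK)) ^ 2) (fun β _ => sq_nonneg _) (Finset.mem_univ α)
    rw [hf α, hself] at this
    nlinarith
  have hcard : (∑ α, if u α = 0 then (1:ℝ) else 0) ≥ 3 := by
    rw [Finset.sum_boole]
    rw [Set.ncard_eq_toFinset_card'] at hv
    simp only [Set.toFinset_ofPred] at hv
    exact_mod_cast hv
  have hnn : ∀ α ∈ Finset.univ, 0 ≤ 1 - (if u α = 0 then (1:ℝ) else 0) - 4 * ‖u α‖ ^ 2 := by
    intro α _
    split_ifs with h
    · simp [h]
    · have := hle α; linarith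
  have hz : ∑ α, (1 - (if u α = 0 then (1:ℝ) else 0) - 4 * ‖u α‖ ^ 2) = 0 := by
    apply le_antisymm _ (Finset.sum_nonneg hnn)
    rw [Finset.sum_sub_distrib, Finset.sum_sub_distrib, ← Finset.mul_sum, h1]
    simp only [Finset.sum_const, Finset.card_univ, Fintype.card_fin]
    rw [nsmul_eq_mul]
    push_cast
    linarith
  have hz' := (Finset.sum_eq_zero_iff_of_nonneg hnn).1 hz
  have hd : ∀ α, u α = 0 ∨ 4 * ‖u α‖ ^ 2 = 1 := by
    intro α
    have := hz' α (Finset.mem_univ _)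
    by_cases h : u α = 0
    · exact Or.inl h
    · right; rw [if_neg h] at this; linarith
  refine ⟨fun α => ?_, fun α β hab => ?_⟩
  · rcases hd α with h | h
    · left; simp [h]
    · right; nlinarith [norm_nonneg (u α)]
  · rcases hd α with h | h
    · simp [h]
    · have := Finset.add_le_sum (f := fun β => (4 * ((u α).re * (u β).re
        + (u α).imI * (u β).imI + (u α).imJ * (u β).imJ
        + (u α).imK * (u β).imK)) ^ 2) (fun β _ => sq_nonneg _) (Finset.mem_univ α)
        (Finset.mem_univ β) hab
      rw [hf α, hself, h] at this
      have h2 := pow_eq_zero_iff (two_ne_zero) |>.1 (le_antisymm (by linarith) (sq_nonneg (4 * ((u α).re * (u β).re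
        + (u α).imI * (u β).imI + (u α).imJ * (u β).imJ
        + (u α).imK * (u β).imK))))
      linarith

/-- Lemma 2.7 of the paper: if `0 < p₁ < p₂ < p₃` and at least three quaternionic coordinates
of `u ∈ N_ν(p)` vanish, then `u₁ ≠ 0` and no quaternionic pair `(u_{2α}, u_{2α+1})` vanishes. -/
theorem vertex_lemma (p₁ p₂ p₃ : ℤ) (hp₁ : 0 < p₁) (hp₁₂ : p₁ < p₂) (hp₂₃ : p₂ < p₃)
    (u : Fin 7 → ℍ[ℝ]) (hu : inN p₁ p₂ p₃ u)
    (hvanish : 3 ≤ {α : Fin 7 | u α = 0}.ncard) :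
    u 0 ≠ 0 ∧ ¬(u 1 = 0 ∧ u 2 = 0) ∧ ¬(u 3 = 0 ∧ u 4 = 0) ∧ ¬(u 5 = 0 ∧ u 6 = 0) := by
  obtain ⟨h1, hi, hj, hk, hc⟩ := hu
  obtain ⟨hn, ho⟩ := structure_lemma u h1 hi hj hk hvanish
  have t1 := nrm_term (u 1) (u 2) (ho 1 2 (by decide))
  have t2 := nrm_term (u 3) (u 4) (ho 3 4 (by decide))
  have t3 := nrm_term (u 5) (u 6) (ho 5 6 (by decide))
  have q1 : (0:ℝ) < p₁ := by exact_mod_cast hp₁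
  have q2 : (p₁:ℝ) < p₂ := by exact_mod_cast hp₁₂
  have q3 : (p₂:ℝ) < p₃ := by exact_mod_cast hp₂₃
  have nz : ∀ p : ℤ, 0 < (p:ℝ) → ‖(p : ℍ[ℝ])‖ = p := by
    intro p hp
    have : (p : ℍ[ℝ]) = ((p : ℝ) : ℍ[ℝ]) := by norm_cast
    rw [this, Quaternion.norm_coe, Real.norm_of_nonneg hp.le]
  set T1 := (p₁ : ℍ[ℝ]) * (star (u 1) * u 2 - star (u 2) * u 1) with hT1
  set T2 := (p₂ : ℍ[ℝ]) * (star (u 3) * u 4 - star (u 4) * u 3) with hT2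
  set T3 := (p₃ : ℍ[ℝ]) * (star (u 5) * u 6 - star (u 6) * u 5) with hT3
  have n1 : ‖T1‖ = p₁ * (2 * (‖u 1‖ * ‖u 2‖)) := by
    rw [hT1, norm_mul, t1, nz _ q1]
  have n2 : ‖T2‖ = p₂ * (2 * (‖u 3‖ * ‖u 4‖)) := by
    rw [hT2, norm_mul, t2, nz _ (by linarith)]
  have n3 : ‖T3‖ = p₃ * (2 * (‖u 5‖ * ‖u 6‖)) := by
    rw [hT3, norm_mul, t3, nz _ (by linarith)]
  have m1 : ‖T1‖ ≤ ‖T2‖ + ‖T3‖ := by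
    rw [show T1 = -(T2 + T3) by rw [eq_neg_iff_add_eq_zero, ← hc]; abel, norm_neg]
    exact norm_add_le _ _
  have m2 : ‖T2‖ ≤ ‖T1‖ + ‖T3‖ := by
    rw [show T2 = -(T1 + T3) by rw [eq_neg_iff_add_eq_zero, ← hc]; abel, norm_neg]
    exact norm_add_le _ _
  have m3 : ‖T3‖ ≤ ‖T1‖ + ‖T2‖ := by
    rw [show T3 = -(T1 + T2) by rw [eq_neg_iff_add_eq_zero, ← hc]; abel, norm_neg]
    exact norm_add_le _ _
  rw [n1, n2, n3] at m1 m2 m3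
  rw [Fin.sum_univ_seven] at h1
  simp only [ne_eq, ← norm_eq_zero (E := ℍ[ℝ])]
  have g0 := hn 0
  have g1 := hn 1
  have g2 := hn 2
  have g3 := hn 3
  have g4 := hn 4
  have g5 := hn 5
  have g6 := hn 6
  clear_value T1 T2 T3
  clear hi hj hk hc ho hn t1 t2 t3 n1 n2 n3 hvanish nz hT1 hT2 hT3
  generalize ‖u 0‖ = x0 at *
  generalize ‖u 1‖ = x1 at *
  generalize ‖u 2‖ = x2 at *
  generalize ‖u 3‖ = x3 at *
  generalize ‖u 4‖ = x4 at *
  generalize ‖u 5‖ = x5 at *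
  generalize ‖u 6‖ = x6 at *
  rcases g0 with rfl | rfl <;> rcases g1 with rfl | rfl <;> rcases g2 with rfl | rfl <;>
  rcases g3 with rfl | rfl <;> rcases g4 with rfl | rfl <;> rcases g5 with rfl | rfl <;>
  rcases g6 with rfl | rfl <;>
  first
  | (exfalso; norm_num at h1; done)
  | (exfalso; linarith)
  | norm_num
end
end

section
/- Suppose p₁, p₂, p₃ are integers with 0 < p₁ < p₂ < p₃ and u = (u₁,…,u₇) ∈ N_ν(p). If u₁ = 0, then for each α ∈ {1,2,3} the pair (u_{2α}, u_{2α+1}) is not (0,0). -/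
open Quaternion

noncomputable section

/-- The vanishing of the `Sp(1)` moment map on four quaternions of total norm one says that they
form (half of) an orthogonal matrix. -/
lemma four_orth (a b c d : ℍ[ℝ])
    (hn : ‖a‖ ^ 2 + ‖b‖ ^ 2 + ‖c‖ ^ 2 + ‖d‖ ^ 2 = 1)
    (hi : star a * qi * a + star b * qi * b + star c * qi * c + star d * qi * d = 0)
    (hj : star a * qj * a + star b * qj * b + star c * qj * c + star d * qj * d = 0)
    (hk : star a * qk * a + star b * qk * b + star c * qk * c + star d * qk * d = 0) :
    (‖a‖ ^ 2 = 1 / 4 ∧ ‖b‖ ^ 2 = 1 / 4 ∧ ‖c‖ ^ 2 = 1 / 4 ∧ ‖d‖ ^ 2 = 1 / 4) ∧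
      (star a * b).re = 0 ∧ (star c * d).re = 0 := by
  have n2 : ∀ x : ℍ[ℝ], ‖x‖ ^ 2 = x.re ^ 2 + x.imI ^ 2 + x.imJ ^ 2 + x.imK ^ 2 := by
    intro x
    rw [sq, ← Quaternion.normSq_eq_norm_mul_self, Quaternion.normSq_def']
  have i0 : qi.re = 0 := rfl
  have i1 : qi.imI = 1 := rfl
  have i2 : qi.imJ = 0 := rfl
  have i3 : qi.imK = 0 := rfl
  have j0 : qj.re = 0 := rfl
  have j1 : qj.imI = 0 := rfl
  have j2 : qj.imJ = 1 := rfl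
  have j3 : qj.imK = 0 := rfl
  have k0 : qk.re = 0 := rfl
  have k1 : qk.imI = 0 := rfl
  have k2 : qk.imJ = 0 := rfl
  have k3 : qk.imK = 1 := rfl
  simp only [n2] at hn ⊢
  rw [Quaternion.ext_iff] at hi hj hk
  simp [i0, i1, i2, i3, j0, j1, j2, j3, k0, k1, k2, k3] at hi hj hk ⊢
  obtain ⟨-, hi1, hi2, hi3⟩ := hi
  obtain ⟨-, hj1, hj2, hj3⟩ := hj
  obtain ⟨-, hk1, hk2, hk3⟩ := hk
  let M : Matrix (Fin 4) (Fin 4) ℝ :=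
    !![a.re, a.imI, a.imJ, a.imK; b.re, b.imI, b.imJ, b.imK;
      c.re, c.imI, c.imJ, c.imK; d.re, d.imI, d.imJ, d.imK]
  have h1 : ((4 : ℝ) • M.transpose) * M = 1 := by
    ext i j
    fin_cases i <;> fin_cases j <;>
      simp [M, Matrix.mul_apply, Fin.sum_univ_four] <;> linarith
  have h2 : M * ((4 : ℝ) • M.transpose) = 1 := mul_eq_one_comm.mp h1
  have e := fun i j => congrFun (congrFun h2 i) j
  have e00 := e 0 0
  have e11 := e 1 1
  have e22 := e 2 2
  have e33 := e 3 3
  have e01 := e 0 1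
  have e23 := e 2 3
  simp [M, Matrix.mul_apply, Fin.sum_univ_four] at e00 e11 e22 e33 e01 e23
  refine ⟨⟨?_, ?_, ?_, ?_⟩, ?_, ?_⟩ <;> linarith

lemma sub_star_of_re (x : ℍ[ℝ]) (h : x.re = 0) : x - star x = 2 * x := by
  have : star x = -x := Quaternion.star_eq_neg.mpr h
  rw [this, two_mul, sub_neg_eq_add]

lemma four_weights (p q : ℤ) (hp : 0 < p) (hq : 0 < q) (a b c d : ℍ[ℝ])
    (hn : ‖a‖ ^ 2 + ‖b‖ ^ 2 + ‖c‖ ^ 2 + ‖d‖ ^ 2 = 1)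
    (hi : star a * qi * a + star b * qi * b + star c * qi * c + star d * qi * d = 0)
    (hj : star a * qj * a + star b * qj * b + star c * qj * c + star d * qj * d = 0)
    (hk : star a * qk * a + star b * qk * b + star c * qk * c + star d * qk * d = 0)
    (hm : (p : ℍ[ℝ]) * (star a * b - star b * a) + (q : ℍ[ℝ]) * (star c * d - star d * c) = 0) :
    p = q := by
  obtain ⟨⟨ha, hb, hc, hd⟩, hab, hcd⟩ := four_orth a b c d hn hi hj hk
  have h1 := sub_star_of_re _ hab
  have h2 := sub_star_of_re _ hcd
  rw [star_mul, star_star] at h1 h2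
  rw [h1, h2] at hm
  have half : ∀ x : ℍ[ℝ], ‖x‖ ^ 2 = 1 / 4 → ‖x‖ = 1 / 2 := by
    intro x hx
    nlinarith [norm_nonneg x]
  have hm' := congrArg norm (eq_neg_of_add_eq_zero_left hm)
  have hnp : ∀ n : ℤ, 0 < n → ‖(n : ℍ[ℝ])‖ = n := by
    intro n hn
    have : ((n : ℝ) : ℍ[ℝ]) = (n : ℍ[ℝ]) := by norm_cast
    rw [← this, Quaternion.norm_coe, Real.norm_eq_abs, abs_of_pos (by exact_mod_cast hn)]
  have h22 : ‖(2 : ℍ[ℝ])‖ = 2 := by simpa using hnp 2 (by norm_num)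
  simp only [norm_neg, norm_mul, norm_star, hnp p hp, hnp q hq, h22, half a ha, half b hb,
    half c hc, half d hd] at hm'
  have : (p : ℝ) = q := by linarith
  exact_mod_cast this

/-- Part (iii) of Corollary 2.11 of the paper: if `0 < p₁ < p₂ < p₃` and `u ∈ N_ν(p)` has
`u₁ = 0`, then no quaternionic pair `(u_{2α}, u_{2α+1})` vanishes. -/
theorem no_pair_vanishes_on_S0 (p₁ p₂ p₃ : ℤ) (hp₁ : 0 < p₁) (hp₁₂ : p₁ < p₂) (hp₂₃ : p₂ < p₃)
    (u : Fin 7 → ℍ[ℝ]) (hu : inN p₁ p₂ p₃ u) (hu1 : u 0 = 0) :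
    ¬(u 1 = 0 ∧ u 2 = 0) ∧ ¬(u 3 = 0 ∧ u 4 = 0) ∧ ¬(u 5 = 0 ∧ u 6 = 0) := by
  obtain ⟨hn, hi, hj, hk, hm⟩ := hu
  simp only [Fin.sum_univ_seven, hu1] at hn hi hj hk
  refine ⟨?_, ?_, ?_⟩
  · rintro ⟨h, h'⟩
    simp [h, h'] at hn hi hj hk hm
    have := four_weights p₂ p₃ (by lia) (by lia) _ _ _ _ hn hi hj hk hm
    lia
  · rintro ⟨h, h'⟩
    simp [h, h'] at hn hi hj hk hm
    have := four_weights p₁ p₃ (by lia) (by lia) _ _ _ _ hn hi hj hk hm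
    lia
  · rintro ⟨h, h'⟩
    simp [h, h'] at hn hi hj hk hm
    have := four_weights p₁ p₂ (by lia) (by lia) _ _ _ _ hn hi hj hk hm
    lia
end
end
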